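/- arXiv:1609.00453 — 2 statements merged into one kernel-verified Lean document; each statement's English description precedes it below -/
import Mathlib

section
/- There exists a 2-factorization of K_45 into exactly 21 C_3-factors and 1 C_5-factor. That is, (21,1) ∈ HWP(45; 3, 5). -/
open SimpleGraph

/-- A `C_k`-factor: a spanning 2-regular subgraph all of whose connected
components (necessarily cycles) have exactly `k` vertices. -/
def IsCycleFactor {V : Type*} (H : SimpleGraph V) (k : ℕ) : Prop :=
  (∀ v : V, (H.neighborSet v).ncard = 2) ∧
  (∀ v : V, (H.connectedComponentMk v).supp.ncard = k)

/-- A 1-factor (perfect matching): every vertex has exactly one neighbour. -/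
def IsOneFactor {V : Type*} (H : SimpleGraph V) : Prop :=
  ∀ v : V, (H.neighborSet v).ncard = 1

/-- `F 0, …, F (N-1)` partitions the edge set of `G`. -/
def IsDecompOn {V : Type*} (G : SimpleGraph V) (F : ℕ → SimpleGraph V) (N : ℕ) : Prop :=
  (∀ i < N, F i ≤ G) ∧
  (∀ i < N, ∀ j < N, i ≠ j → Disjoint (F i).edgeSet (F j).edgeSet) ∧
  G.edgeSet = ⋃ i ∈ Set.Iio N, (F i).edgeSet

/-- A Hamilton–Waterloo decomposition of a graph `G` into `α` `C_m`-factors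
and `β` `C_n`-factors. -/
def IsHWGraph {V : Type*} (G : SimpleGraph V) (m n α β : ℕ) : Prop :=
  ∃ F : ℕ → SimpleGraph V, IsDecompOn G F (α + β) ∧
    (∀ i < α, IsCycleFactor (F i) m) ∧
    (∀ i, α ≤ i → i < α + β → IsCycleFactor (F i) n)

/-- `HW v m n α β`: a partition of `E(K_v)` (for `v` odd) or of `E(K_v)` minus a
perfect matching (for `v` even) into `α` `C_m`-factors and `β` `C_n`-factors. -/
def HW (v m n α β : ℕ) : Prop :=
  ∃ I : SimpleGraph (Fin v),
    (Odd v → I = ⊥) ∧ (Even v → IsOneFactor I) ∧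
    IsHWGraph ((⊤ : SimpleGraph (Fin v)) \ I) m n α β

/-- The complete `u`-partite graph with parts of size `g`. -/
def Kpartite (u g : ℕ) : SimpleGraph (Fin u × Fin g) :=
  SimpleGraph.fromRel (fun a b => a.1 ≠ b.1)

/-- The Cayley graph on an additive group with connection set `S`. -/
def cayley (Γ : Type*) [AddGroup Γ] (S : Set Γ) : SimpleGraph Γ :=
  SimpleGraph.fromRel (fun a b => a - b ∈ S)

/-!
Identify the vertices with `G = ZMod 15 × ZMod 3`. Given a homomorphism `φ : G →+ Q` and an
injective `δ : Q → G`, the maps `g ↦ g + δ (φ g - t)`, `t : Q`, traverse each arc `(g, g + d)` with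
`d` in the range of `δ` exactly once, namely for `t = φ g - δ⁻¹ d`. If the range of `δ` does not
meet its own negative, the graphs of these maps therefore decompose the Cayley graph on that range.
All orbits of all these maps have prime length `k` as soon as `δ` is nonzero and sums to zero along
`k` steps of the induced map on `Q`.

The 22 nonzero differences of `G` up to sign are split accordingly: 15 of them (`Q = ZMod 15`) and
6 of them (`Q = ZMod 3 × ZMod 2`) give triangle factors, and `(3, 0)` (`Q` trivial) gives the
pentagon factor.
-/

open Function

section SuccessorGraph

variable {V : Type*} {σ : V → V} {k : ℕ}

/-- The graph with an edge between every point that `σ` moves and its image. If all points are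
periodic under `σ` with period at least three, it is the union of the cycles traversed by `σ`. -/
def successorGraph (σ : V → V) : SimpleGraph V :=
  fromRel fun u v ↦ σ u = v

lemma successorGraph_adj_of_minimalPeriod_ne_one (hσ : ∀ v, minimalPeriod σ v ≠ 1) {u v : V} :
    (successorGraph σ).Adj u v ↔ σ u = v ∨ σ v = u := by
  have hfix (w : V) : σ w ≠ w := fun h ↦ hσ w (minimalPeriod_eq_one_iff_isFixedPt.2 h)
  rw [successorGraph, fromRel_adj, and_iff_right_iff_imp]
  rintro h rfl
  exact hfix u (h.elim id id)

lemma apply_eq_iff_eq_iterate_pred (hk : 0 < k) (hσ : ∀ v, IsPeriodicPt σ k v) {u v : V} :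
    σ u = v ↔ u = σ^[k - 1] v := by
  obtain ⟨m, rfl⟩ := Nat.exists_eq_add_one.2 hk
  rw [Nat.add_sub_cancel]
  constructor
  · rintro rfl
    exact (hσ u).symm
  · rintro rfl
    exact (iterate_succ_apply' σ m v).symm.trans (hσ v)

lemma neighborSet_successorGraph (hk : 1 < k) (hσ : ∀ v, minimalPeriod σ v = k) (v : V) :
    (successorGraph σ).neighborSet v = {σ v, σ^[k - 1] v} := by
  have hper (w : V) : IsPeriodicPt σ k w := hσ w ▸ isPeriodicPt_minimalPeriod σ w
  ext w
  rw [mem_neighborSet, successorGraph_adj_of_minimalPeriod_ne_one (fun w ↦ hσ w ▸ hk.ne'),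
    apply_eq_iff_eq_iterate_pred (by lia) hper (u := w), Set.mem_insert_iff,
    Set.mem_singleton_iff, eq_comm]

lemma reachable_successorGraph_iterate (σ : V → V) (n : ℕ) (v : V) :
    (successorGraph σ).Reachable v (σ^[n] v) := by
  induction n with
  | zero => exact Reachable.rfl
  | succ n ih =>
    rw [iterate_succ_apply']
    by_cases hfix : σ^[n] v = σ (σ^[n] v)
    · rwa [← hfix]
    · exact ih.trans (Adj.reachable ⟨hfix, Or.inl rfl⟩)

lemma reachable_successorGraph_iff (hk : 0 < k) (hσ : ∀ v, IsPeriodicPt σ k v) {v w : V} :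
    (successorGraph σ).Reachable v w ↔ ∃ n, σ^[n] v = w := by
  constructor
  · rw [reachable_iff_reflTransGen]
    intro h
    induction h with
    | refl => exact ⟨0, rfl⟩
    | @tail b c _ hbc ih =>
      obtain ⟨n, rfl⟩ := ih
      rcases hbc.2 with hforward | hbackward
      · exact ⟨n + 1, by rw [iterate_succ_apply', hforward]⟩
      · rw [apply_eq_iff_eq_iterate_pred hk hσ, ← iterate_add_apply] at hbackward
        exact ⟨_, hbackward.symm⟩
  · rintro ⟨n, rfl⟩
    exact reachable_successorGraph_iterate σ n v

lemma supp_connectedComponentMk_successorGraph (hk : 0 < k) (hσ : ∀ v, minimalPeriod σ v = k)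
    (v : V) :
    ((successorGraph σ).connectedComponentMk v).supp = (σ^[·] v) '' Set.Iio k := by
  have hper (w : V) : IsPeriodicPt σ k w := hσ w ▸ isPeriodicPt_minimalPeriod σ w
  ext w
  rw [ConnectedComponent.mem_supp_iff, ConnectedComponent.eq, reachable_comm,
    reachable_successorGraph_iff hk hper]
  constructor
  · rintro ⟨n, rfl⟩
    exact ⟨n % k, Nat.mod_lt n hk, (hper v).iterate_mod_apply n⟩
  · rintro ⟨n, -, rfl⟩
    exact ⟨n, rfl⟩

theorem isCycleFactor_successorGraph (hk : 3 ≤ k) (hσ : ∀ v, minimalPeriod σ v = k) :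
    IsCycleFactor (successorGraph σ) k := by
  have hinj (v : V) : (Set.Iio k).InjOn (σ^[·] v) := hσ v ▸ iterate_injOn_Iio_minimalPeriod
  refine ⟨fun v ↦ ?_, fun v ↦ ?_⟩
  · rw [neighborSet_successorGraph (by lia) hσ, Set.ncard_pair]
    intro h
    have : 1 = k - 1 := hinj v (Set.mem_Iio.2 (by lia)) (Set.mem_Iio.2 (by lia)) h
    lia
  · rw [supp_connectedComponentMk_successorGraph (by lia) hσ, (hinj v).ncard_image,
      Set.ncard_eq_toFinset_card', Set.toFinset_Iio, Nat.card_Iio]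

end SuccessorGraph

section Transport

variable {V W : Type*} {G : SimpleGraph V}

lemma IsCycleFactor.map {k : ℕ} (hG : IsCycleFactor G k) (e : V ≃ W) :
    IsCycleFactor (G.map e.toEmbedding) k := by
  let f : G ≃g G.map e.toEmbedding := Iso.map e G
  refine ⟨e.forall_congr_right.1 fun v ↦ ?_, e.forall_congr_right.1 fun v ↦ ?_⟩
  · exact (Nat.card_congr (f.mapNeighborSet v)).symm.trans (hG.1 v)
  · exact (Nat.card_congr
      (ConnectedComponent.isoEquivSupp f (G.connectedComponentMk v))).symm.trans (hG.2 v)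

lemma IsDecompOn.map {F : ℕ → SimpleGraph V} {N : ℕ} (hF : IsDecompOn G F N) (f : V ↪ W) :
    IsDecompOn (G.map f) (fun i ↦ (F i).map f) N := by
  obtain ⟨hle, hdisj, hunion⟩ := hF
  refine ⟨fun i hi ↦ map_monotone f (hle i hi), fun i hi j hj hij ↦ ?_, ?_⟩
  · rw [edgeSet_map, edgeSet_map, Set.disjoint_image_iff f.sym2Map.injective]
    exact hdisj i hi j hj hij
  · simp only [edgeSet_map, hunion, Set.image_iUnion]

lemma IsHWGraph.map {m n α β : ℕ} (hG : IsHWGraph G m n α β) (e : V ≃ W) :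
    IsHWGraph (G.map e.toEmbedding) m n α β := by
  obtain ⟨F, hdecomp, hm, hn⟩ := hG
  exact ⟨_, hdecomp.map e.toEmbedding, fun i hi ↦ (hm i hi).map e,
    fun i hi hi' ↦ (hn i hi hi').map e⟩

theorem IsHWGraph.hw_of_odd {v m n α β : ℕ} (hv : Odd v) (e : V ≃ Fin v)
    (h : IsHWGraph (⊤ : SimpleGraph V) m n α β) : HW v m n α β := by
  refine ⟨⊥, fun _ ↦ rfl, fun heven ↦ absurd hv (Nat.not_odd_iff_even.2 heven), ?_⟩
  have hmap : (⊤ : SimpleGraph V).map e.toEmbedding = ⊤ \ ⊥ := by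
    rw [sdiff_bot]
    ext u w
    obtain ⟨u, rfl⟩ := e.surjective u
    obtain ⟨w, rfl⟩ := e.surjective w
    exact (Iso.map e ⊤).map_adj_iff.trans e.injective.ne_iff.symm
  exact hmap ▸ h.map e

end Transport

section EdgeDecomposition

variable {V ι κ : Type*} {G H : SimpleGraph V}

/-- The edges of the graphs `F i` partition the edges of `G`. Unlike in `IsDecompOn`, the index type
is arbitrary, so that decompositions can be combined along `⊕`. -/
structure IsEdgeDecomp (F : ι → SimpleGraph V) (G : SimpleGraph V) : Prop where
  pairwise_disjoint : Pairwise (Disjoint on F)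
  iSup_eq : ⨆ i, F i = G

namespace IsEdgeDecomp

lemma sumElim {F : ι → SimpleGraph V} {F' : κ → SimpleGraph V} (hF : IsEdgeDecomp F G)
    (hF' : IsEdgeDecomp F' H) (hGH : Disjoint G H) : IsEdgeDecomp (Sum.elim F F') (G ⊔ H) where
  pairwise_disjoint := by
    have hcross (i : ι) (j : κ) : Disjoint (F i) (F' j) :=
      hGH.mono (hF.iSup_eq ▸ le_iSup F i) (hF'.iSup_eq ▸ le_iSup F' j)
    rintro (i | i) (j | j) hij
    · exact hF.pairwise_disjoint (ne_of_apply_ne Sum.inl hij)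
    · exact hcross i j
    · exact (hcross j i).symm
    · exact hF'.pairwise_disjoint (ne_of_apply_ne Sum.inr hij)
  iSup_eq := by simp only [iSup_sum, Sum.elim_inl, Sum.elim_inr, hF.iSup_eq, hF'.iSup_eq]

lemma comp_equiv {F : ι → SimpleGraph V} (hF : IsEdgeDecomp F G) (e : κ ≃ ι) :
    IsEdgeDecomp (F ∘ e) G :=
  ⟨hF.pairwise_disjoint.comp_of_injective e.injective, (e.iSup_comp).trans hF.iSup_eq⟩

lemma isDecompOn_extend {N : ℕ} {F : Fin N → SimpleGraph V} (hF : IsEdgeDecomp F G) :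
    IsDecompOn G (extend Fin.val F ⊥) N := by
  have hext (i : Fin N) : extend Fin.val F ⊥ i = F i := Fin.val_injective.extend_apply F ⊥ i
  refine ⟨fun i hi ↦ ?_, fun i hi j hj hij ↦ ?_, ?_⟩
  · exact hext ⟨i, hi⟩ ▸ hF.iSup_eq ▸ le_iSup F ⟨i, hi⟩
  · rw [hext ⟨i, hi⟩, hext ⟨j, hj⟩, disjoint_edgeSet]
    exact hF.pairwise_disjoint (Fin.val_injective.ne_iff.1 hij)
  · rw [← hF.iSup_eq, edgeSet_iSup, ← Fin.range_val, Set.biUnion_range]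
    simp only [hext]

theorem isHWGraph [Fintype ι] [Fintype κ] {F : ι ⊕ κ → SimpleGraph V} {m n : ℕ}
    (hF : IsEdgeDecomp F G) (hm : ∀ i, IsCycleFactor (F (.inl i)) m)
    (hn : ∀ j, IsCycleFactor (F (.inr j)) n) :
    IsHWGraph G m n (Fintype.card ι) (Fintype.card κ) := by
  let e := finSumFinEquiv.symm.trans
    (Equiv.sumCongr (Fintype.equivFin ι).symm (Fintype.equivFin κ).symm)
  have hext (i) : extend Fin.val (F ∘ e) ⊥ (i : Fin _).val = F (e i) :=
    Fin.val_injective.extend_apply (F ∘ e) ⊥ i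
  refine ⟨_, (hF.comp_equiv e).isDecompOn_extend, fun i hi ↦ ?_, fun i hi hi' ↦ ?_⟩
  · have := hext (Fin.castAdd _ ⟨i, hi⟩)
    simp only [e, Equiv.trans_apply, finSumFinEquiv_symm_apply_castAdd, Equiv.sumCongr_apply,
      Sum.map_inl] at this
    exact this ▸ hm _
  · obtain ⟨j, rfl⟩ := Nat.exists_eq_add_of_le hi
    have := hext (Fin.natAdd _ ⟨j, by lia⟩)
    simp only [e, Equiv.trans_apply, finSumFinEquiv_symm_apply_natAdd, Equiv.sumCongr_apply,
      Sum.map_inr] at this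
    exact this ▸ hn _

end IsEdgeDecomp

end EdgeDecomposition

section Cayley

variable {Γ : Type*} [AddGroup Γ] {S T : Set Γ}

lemma cayley_adj {a b : Γ} : (cayley Γ S).Adj a b ↔ a ≠ b ∧ (a - b ∈ S ∨ b - a ∈ S) := Iff.rfl

lemma cayley_union : cayley Γ (S ∪ T) = cayley Γ S ⊔ cayley Γ T := by
  ext a b
  simp only [sup_adj, cayley_adj, Set.mem_union]
  tauto

lemma disjoint_cayley (h : ∀ s ∈ S, s ∉ T ∧ -s ∉ T) : Disjoint (cayley Γ S) (cayley Γ T) := by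
  rw [disjoint_left]
  rintro a b ⟨-, hab | hab⟩ ⟨-, hab' | hab'⟩
  all_goals have := h _ hab
  all_goals simp_all

lemma cayley_eq_top (h : ∀ d : Γ, d ≠ 0 → d ∈ S ∨ -d ∈ S) : cayley Γ S = ⊤ := by
  ext a b
  rw [cayley_adj, top_adj, and_iff_left_iff_imp]
  exact fun hab ↦ neg_sub a b ▸ h _ (sub_ne_zero.2 hab)

end Cayley

section Development

variable {G Q : Type*} [AddCommGroup G] [AddCommGroup Q] (φ : G →+ Q) (δ : Q → G)

/-- The translate by `t` of the map on `G` that moves each `g` by the difference which `δ` assigns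
to the class of `g` in `Q`. -/
def developedSucc (t : Q) (g : G) : G := g + δ (φ g - t)

/-- The map induced on `Q` by `developedSucc φ δ 0`. -/
def inducedSucc (q : Q) : Q := q + φ (δ q)

lemma iterate_developedSucc (t : Q) (n : ℕ) (g : G) :
    (developedSucc φ δ t)^[n] g = g + birkhoffSum (inducedSucc φ δ) δ n (φ g - t) := by
  induction n generalizing g with
  | zero => rw [iterate_zero_apply, birkhoffSum_zero, add_zero]
  | succ n ih =>
    have hclass : φ (developedSucc φ δ t g) - t = inducedSucc φ δ (φ g - t) := by
      rw [developedSucc, inducedSucc, map_add, add_sub_right_comm]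
    rw [iterate_succ_apply, ih, hclass, birkhoffSum_succ', ← add_assoc, developedSucc]

variable {φ δ}

lemma minimalPeriod_developedSucc {k : ℕ} (hk : k.Prime) (hδ : ∀ q, δ q ≠ 0)
    (hsum : ∀ q, birkhoffSum (inducedSucc φ δ) δ k q = 0) (t : Q) (g : G) :
    minimalPeriod (developedSucc φ δ t) g = k := by
  have := Fact.mk hk
  refine minimalPeriod_eq_prime ?_ ?_
  · rw [IsPeriodicPt, IsFixedPt, iterate_developedSucc, hsum, add_zero]
  · exact fun h ↦ hδ _ (add_eq_left.1 h)

lemma developedSucc_eq_iff {t : Q} {a b : G} :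
    developedSucc φ δ t a = b ↔ δ (φ a - t) = b - a := by
  rw [developedSucc, eq_sub_iff_add_eq']

theorem isCycleFactor_developedSucc {k : ℕ} (hk : k.Prime) (hk3 : 3 ≤ k) (hδ : ∀ q, δ q ≠ 0)
    (hsum : ∀ q, birkhoffSum (inducedSucc φ δ) δ k q = 0) (t : Q) :
    IsCycleFactor (successorGraph (developedSucc φ δ t)) k :=
  isCycleFactor_successorGraph hk3 (minimalPeriod_developedSucc hk hδ hsum t)

theorem isEdgeDecomp_developedSucc (hinj : Injective δ) (hneg : ∀ q q', δ q ≠ -δ q') :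
    IsEdgeDecomp (fun t ↦ successorGraph (developedSucc φ δ t)) (cayley G (Set.range δ)) where
  pairwise_disjoint := by
    intro t t' htt'
    have hsame {a b : G} (h : developedSucc φ δ t a = b) : developedSucc φ δ t' a ≠ b := by
      intro h'
      rw [developedSucc_eq_iff] at h h'
      exact htt' (sub_right_injective (hinj (h.trans h'.symm)))
    have hopposite {a b : G} (h : developedSucc φ δ t a = b) : developedSucc φ δ t' b ≠ a := by
      intro h'
      rw [developedSucc_eq_iff] at h h'
      exact hneg _ _ (h.trans (by rw [h', neg_sub]))
    refine disjoint_left.2 ?_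
    rintro a b ⟨-, hab | hba⟩ ⟨-, hab' | hba'⟩
    exacts [hsame hab hab', hopposite hab hba', hopposite hba hab', hsame hba hba']
  iSup_eq := by
    have harc (a b : G) : (∃ t, developedSucc φ δ t a = b) ↔ b - a ∈ Set.range δ := by
      simp only [developedSucc_eq_iff]
      exact (Equiv.subLeft (φ a)).exists_congr_left.trans (by simp)
    ext a b
    simp only [iSup_adj, successorGraph, fromRel_adj, exists_and_left, exists_or, harc, cayley_adj,
      or_comm]

end Development

section Construction

/-- Differences of the triangles `{0₀, 1₀, 2₁}`, `{3₀, 4₂, 8₁}`, `{5₀, 9₁, 11₀}`, `{6₀, 10₀, 13₁}`,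
`{7₀, 12₀, 14₀}`, where `xᵢ` is `(x, i)`: the entry at `x` leads from `xᵢ` to the next vertex. The
translates of these triangles by `0 × ZMod 3` form a triangle factor. -/
def starterDiff : ZMod 15 → ZMod 15 × ZMod 3 :=
  ![(1, 0), (1, 1), (13, 2), (1, 2), (4, 2), (4, 1), (4, 0), (5, 0), (10, 2), (2, 2), (3, 1),
    (9, 0), (2, 0), (8, 2), (8, 0)]

/-- Differences of the triangles meeting all three layers `ZMod 15 × {i}`, for two base factors
`j : ZMod 2`: the entry at `(i, j)` shifts layer `i` onto the next one. For each `j`, the shifts add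
up to zero over the layers. -/
def layerDiff (q : ZMod 3 × ZMod 2) : ZMod 15 × ZMod 3 :=
  ((![![0, 8], ![6, 10], ![9, 12]] : ZMod 3 → ZMod 2 → ZMod 15) q.1 q.2, 1)

/-- The one difference, of order five, used for the pentagons. -/
def pentagonDiff (_ : Unit) : ZMod 15 × ZMod 3 := (3, 0)

/-- The triangle factors obtained by translating the starter triangles along `ZMod 15`. -/
def starterFactor : ZMod 15 → SimpleGraph (ZMod 15 × ZMod 3) :=
  fun t ↦ successorGraph (developedSucc (AddMonoidHom.fst _ _) starterDiff t)

/-- The triangle factors whose triangles meet all three layers. The zero component of the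
homomorphism keeps the two base factors apart. -/
def layerFactor : ZMod 3 × ZMod 2 → SimpleGraph (ZMod 15 × ZMod 3) :=
  fun t ↦ successorGraph (developedSucc ((AddMonoidHom.snd _ _).prod 0) layerDiff t)

/-- The pentagon factor, as a family with one member. -/
def pentagonFactor : Unit → SimpleGraph (ZMod 15 × ZMod 3) :=
  fun t ↦ successorGraph (developedSucc 0 pentagonDiff t)

lemma isCycleFactor_starterFactor (t : ZMod 15) : IsCycleFactor (starterFactor t) 3 :=
  isCycleFactor_developedSucc Nat.prime_three le_rfl (by decide) (by decide) t

lemma isCycleFactor_layerFactor (t : ZMod 3 × ZMod 2) : IsCycleFactor (layerFactor t) 3 :=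
  isCycleFactor_developedSucc Nat.prime_three le_rfl (by decide) (by decide) t

lemma isCycleFactor_pentagonFactor (t : Unit) : IsCycleFactor (pentagonFactor t) 5 :=
  isCycleFactor_developedSucc Nat.prime_five (by simp) (by decide) (by decide) t

lemma isEdgeDecomp_starterFactor :
    IsEdgeDecomp starterFactor (cayley _ (Set.range starterDiff)) :=
  isEdgeDecomp_developedSucc (by decide) (by decide)

lemma isEdgeDecomp_layerFactor : IsEdgeDecomp layerFactor (cayley _ (Set.range layerDiff)) :=
  isEdgeDecomp_developedSucc (by decide) (by decide)

lemma isEdgeDecomp_pentagonFactor :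
    IsEdgeDecomp pentagonFactor (cayley _ (Set.range pentagonDiff)) :=
  isEdgeDecomp_developedSucc (by decide) (by decide)

lemma disjoint_cayley_starterDiff_layerDiff :
    Disjoint (cayley _ (Set.range starterDiff)) (cayley _ (Set.range layerDiff)) :=
  disjoint_cayley (by simp only [Set.mem_range]; decide)

lemma disjoint_cayley_triangleDiff_pentagonDiff :
    Disjoint (cayley _ (Set.range starterDiff) ⊔ cayley _ (Set.range layerDiff))
      (cayley _ (Set.range pentagonDiff)) := by
  refine disjoint_sup_left.2 ⟨disjoint_cayley ?_, disjoint_cayley ?_⟩ <;>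
  · simp only [Set.mem_range]
    decide

lemma cayley_starterDiff_sup_layerDiff_sup_pentagonDiff :
    cayley _ (Set.range starterDiff) ⊔ cayley _ (Set.range layerDiff) ⊔
      cayley _ (Set.range pentagonDiff) = ⊤ := by
  rw [← cayley_union, ← cayley_union]
  refine cayley_eq_top ?_
  simp only [Set.mem_union, Set.mem_range]
  decide

theorem isEdgeDecomp_top_factors :
    IsEdgeDecomp (Sum.elim (Sum.elim starterFactor layerFactor) pentagonFactor) ⊤ :=
  cayley_starterDiff_sup_layerDiff_sup_pentagonDiff ▸
    (isEdgeDecomp_starterFactor.sumElim isEdgeDecomp_layerFactor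
      disjoint_cayley_starterDiff_layerDiff).sumElim isEdgeDecomp_pentagonFactor
      disjoint_cayley_triangleDiff_pentagonDiff

end Construction

theorem stmt_10 : HW 45 3 5 21 1 := by
  have htriangle : ∀ i, IsCycleFactor (Sum.elim starterFactor layerFactor i) 3 :=
    Sum.rec isCycleFactor_starterFactor isCycleFactor_layerFactor
  have hgraph : IsHWGraph (⊤ : SimpleGraph (ZMod 15 × ZMod 3)) 3 5 21 1 :=
    isEdgeDecomp_top_factors.isHWGraph htriangle isCycleFactor_pentagonFactor
  exact hgraph.hw_of_odd (by decide) (Fintype.equivFinOfCardEq rfl)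
end

section
/- For every v ≡ 15 (mod 30) with v > 15, there exists a 2-factorization of K_v into (v−3)/2 C_3-factors and exactly 1 C_5-factor. -/
open SimpleGraph

/-!
Let `G` be an abelian group of odd order `2h + 3`, and let `d` run through the `h + 1` elements of
a half-system of `G`. The complete graph on `G × Fin 15` is decomposed by differences in `G`. A
triangle `{(x - d, a), (x, b), (x + d, c)}` uses two edges of difference `d` and one of difference
`2d`. For any two labels `a, b`, the triangles with half-step `d` contain either all edges of
difference `±d` or all edges of difference `±2d` between points with these labels, and the choice
depends on `a, b` only. As doubling is injective on `G`, these triangles together cover each edge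
between distinct fibres.

Six classes of triangles per `d` have labels that do not depend on `x`, and in nine further ones
the labels depend on a colour of `x`. A coloured class is a factor if the colours of `x` and
`x + 2d` always differ by one of two fixed permutations of the colours, of order two and three. Such
colourings exist because the walk `x, x + 2d, x + 4d, …` closes up after an odd number `m ≥ 3` of
steps, and `m = 3 + 2q`.

For a single element `g` of the half-system, twelve starter classes replace the six uncoloured ones
and also cover the edges inside the fibres `{x} × Fin 15` that do not lie in the pentagons. This
makes `12 + 6h + 9(h + 1) + 1` factors, so each point lies on as many edges of factors as it has
neighbours, and no edge is covered twice.
-/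

section CycleFactors

variable {V W T : Type*} {k : ℕ}

lemma IsCycleFactor.of_iso {G : SimpleGraph V} {H : SimpleGraph W} (e : G ≃g H)
    (hG : IsCycleFactor G k) : IsCycleFactor H k := by
  refine ⟨e.surjective.forall.2 fun v ↦ ?_, e.surjective.forall.2 fun v ↦ ?_⟩
  · exact (Nat.card_congr (e.mapNeighborSet v)).symm.trans (hG.1 v)
  · exact (Nat.card_congr
      (ConnectedComponent.isoEquivSupp e (G.connectedComponentMk v))).symm.trans (hG.2 v)

lemma isCycleFactor_bot_boxProd_cycleGraph (T : Type*) (hk : 3 ≤ k) :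
    IsCycleFactor ((⊥ : SimpleGraph T) □ cycleGraph k) k := by
  obtain ⟨l, rfl⟩ := Nat.exists_eq_add_of_le' hk
  constructor
  · rintro ⟨t, r⟩
    have hcycle : ((cycleGraph (l + 3)).neighborSet r).ncard = 2 := by
      rw [← Nat.card_coe_set_eq, Nat.card_eq_fintype_card, card_neighborSet_eq_degree,
        cycleGraph_degree_three_le]
    simp [neighborSet_boxProd, Set.ncard_prod, hcycle]
  · rintro ⟨t, r⟩
    have hsupp : (((⊥ : SimpleGraph T) □ cycleGraph (l + 3)).connectedComponentMk (t, r)).supp =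
        {t} ×ˢ Set.univ := by
      ext ⟨t', r'⟩
      simp [ConnectedComponent.mem_supp_iff, reachable_boxProd, cycleGraph_preconnected r' r]
    simp [hsupp, Set.ncard_prod, Set.ncard_univ]

/-- The graph formed by the cycles `φ (t, 0), φ (t, 1), …, φ (t, k - 1)` of length `k`, one for
each `t : T`. -/
def cyclesOf (φ : T × Fin k → V) : SimpleGraph V :=
  ((⊥ : SimpleGraph T) □ cycleGraph k).map φ

lemma isCycleFactor_cyclesOf (hk : 3 ≤ k) {φ : T × Fin k → V} (hφ : Function.Bijective φ) :
    IsCycleFactor (cyclesOf φ) k :=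
  (isCycleFactor_bot_boxProd_cycleGraph T hk).of_iso (Iso.map (Equiv.ofBijective φ hφ) _)

lemma isCycleFactor_cyclesOf_of_surjective [Fintype V] [Fintype T] (hk : 3 ≤ k)
    {φ : T × Fin k → V} (hφ : Function.Surjective φ)
    (hcard : Fintype.card T * k = Fintype.card V) : IsCycleFactor (cyclesOf φ) k :=
  isCycleFactor_cyclesOf hk <|
    (Fintype.bijective_iff_surjective_and_card φ).2 ⟨hφ, by simpa using hcard⟩

lemma cyclesOf_adj {φ : T × Fin k → V} {t : T} {r r' : Fin k} (hr : (cycleGraph k).Adj r r')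
    (hne : φ (t, r) ≠ φ (t, r')) : (cyclesOf φ).Adj (φ (t, r)) (φ (t, r')) :=
  map_adj_apply' (boxProd_adj_right.2 hr) hne

end CycleFactors

section Decompositions

open scoped Function

variable {V W ι κ : Type*} {m n α β : ℕ}

lemma pairwise_disjoint_of_sum_ncard_le [Fintype ι] [Finite V] {s : ι → Set V}
    (h : ∑ i, (s i).ncard ≤ (⋃ i, s i).ncard) : Pairwise (Disjoint on s) := by
  have hbij : Function.Bijective (Set.sigmaToiUnion s) :=
    (Set.sigmaToiUnion_surjective s).bijective_of_nat_card_le <| by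
      simpa only [Nat.card_sigma, Nat.card_coe_set_eq] using h
  refine fun i j hij ↦ Set.disjoint_left.2 fun x hi hj ↦ hij ?_
  exact congrArg Sigma.fst (@hbij.1 ⟨i, x, hi⟩ ⟨j, x, hj⟩ rfl)

lemma pairwise_disjoint_of_sum_ncard_neighborSet_le [Fintype ι] [Finite V]
    {F : ι → SimpleGraph V}
    (h : ∀ v, ∑ i, ((F i).neighborSet v).ncard ≤ ((⨆ i, F i).neighborSet v).ncard) :
    Pairwise (Disjoint on F) := by
  intro i j hij
  rw [Function.onFun, disjoint_left]
  intro x y hi hj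
  have hx := pairwise_disjoint_of_sum_ncard_le ((h x).trans_eq (by rw [neighborSet_iSup]))
  exact Set.disjoint_left.1 (hx hij) hi hj

lemma isDecompOn_iSup {N : ℕ} (e : Fin N ≃ ι) {F : ι → SimpleGraph V}
    (hdisj : Pairwise (Disjoint on F)) :
    IsDecompOn (⨆ i, F i) (fun i ↦ if hi : i < N then F (e ⟨i, hi⟩) else ⊥) N := by
  refine ⟨fun i hi ↦ ?_, fun i hi j hj hij ↦ ?_, ?_⟩
  · simpa only [hi, dif_pos] using le_iSup F _
  · simpa only [hi, hj, dif_pos, disjoint_edgeSet] using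
      hdisj (e.injective.ne (by simpa using hij))
  · ext x
    simp only [edgeSet_iSup, Set.mem_iUnion, Set.mem_Iio, e.surjective.exists]
    constructor
    · rintro ⟨i, hi⟩
      exact ⟨i, i.2, by simpa only [i.2, dif_pos] using hi⟩
    · rintro ⟨i, hi, hx⟩
      exact ⟨⟨i, hi⟩, by simpa only [hi, dif_pos] using hx⟩

theorem isHWGraph_iSup [Fintype ι] [Fintype κ] {A : ι → SimpleGraph V} {B : κ → SimpleGraph V}
    (hA : ∀ i, IsCycleFactor (A i) m) (hB : ∀ j, IsCycleFactor (B j) n)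
    (hdisj : Pairwise (Disjoint on Sum.elim A B)) :
    IsHWGraph (⨆ c, Sum.elim A B c) m n (Fintype.card ι) (Fintype.card κ) := by
  let e : Fin (Fintype.card ι + Fintype.card κ) ≃ ι ⊕ κ := finSumFinEquiv.symm.trans
    (Equiv.sumCongr (Fintype.equivFin ι).symm (Fintype.equivFin κ).symm)
  refine ⟨_, isDecompOn_iSup e hdisj, fun i hi ↦ ?_, fun i hi hi' ↦ ?_⟩
  · have hi' : i < Fintype.card ι + Fintype.card κ := by omega
    have hei : e ⟨i, hi'⟩ = .inl ((Fintype.equivFin ι).symm ⟨i, hi⟩) :=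
      congrArg (Equiv.sumCongr _ _) (finSumFinEquiv_symm_apply_castAdd ⟨i, hi⟩)
    simpa only [hi', dif_pos, hei, Sum.elim_inl] using hA _
  · obtain ⟨j, rfl⟩ := Nat.exists_eq_add_of_le hi
    have hej : e ⟨_, hi'⟩ = .inr ((Fintype.equivFin κ).symm ⟨j, by omega⟩) :=
      congrArg (Equiv.sumCongr _ _) (finSumFinEquiv_symm_apply_natAdd ⟨j, by omega⟩)
    simpa only [hi', dif_pos, hej, Sum.elim_inr] using hB _

-- Each vertex has `2 (|ι| + |κ|) = |V| - 1` edges in the factors, so a cover has no overlaps.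
theorem isHWGraph_top_of_cover [Fintype V] [Fintype ι] [Fintype κ] {A : ι → SimpleGraph V}
    {B : κ → SimpleGraph V} (hA : ∀ i, IsCycleFactor (A i) m) (hB : ∀ j, IsCycleFactor (B j) n)
    (hcard : Fintype.card V = 2 * (Fintype.card ι + Fintype.card κ) + 1)
    (hcover : ∀ x y, x ≠ y → (∃ i, (A i).Adj x y) ∨ ∃ j, (B j).Adj x y) :
    IsHWGraph (⊤ : SimpleGraph V) m n (Fintype.card ι) (Fintype.card κ) := by
  have htop : ⨆ c, Sum.elim A B c = ⊤ := by
    ext x y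
    simpa using ⟨by rintro (⟨i, h⟩ | ⟨j, h⟩) <;> exact h.ne, hcover x y⟩
  rw [← htop]
  refine isHWGraph_iSup hA hB (pairwise_disjoint_of_sum_ncard_neighborSet_le fun v ↦ ?_)
  simp only [htop, neighborSet_top, Fintype.sum_sum_type, Sum.elim_inl, Sum.elim_inr, (hA _).1,
    (hB _).1, Finset.sum_const, Finset.card_univ, smul_eq_mul]
  have hv := Set.ncard_add_ncard_compl {v}
  rw [Set.ncard_singleton, Nat.card_eq_fintype_card] at hv
  omega

lemma IsHWGraph.map_equiv {G : SimpleGraph V} (e : V ≃ W) (hG : IsHWGraph G m n α β) :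
    IsHWGraph (G.map e) m n α β := by
  obtain ⟨F, ⟨hle, hdisj, hunion⟩, hm, hn⟩ := hG
  refine ⟨fun i ↦ (F i).map e, ⟨fun i hi ↦ map_monotone e (hle i hi),
    fun i hi j hj hij ↦ ?_, ?_⟩, fun i hi ↦ (hm i hi).of_iso (Iso.map e _),
    fun i hi hi' ↦ (hn i hi hi').of_iso (Iso.map e _)⟩
  · have himage := (Set.disjoint_image_iff e.toEmbedding.sym2Map.injective).2 (hdisj i hi j hj hij)
    simpa only [← edgeSet_map, Equiv.coe_toEmbedding] using himage
  · have himage := congrArg (e.toEmbedding.sym2Map '' ·) hunion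
    simpa only [Set.image_iUnion, ← edgeSet_map, Equiv.coe_toEmbedding] using himage

lemma IsHWGraph.hw_card [Fintype V] (hV : Odd (Fintype.card V))
    (h : IsHWGraph (⊤ : SimpleGraph V) m n α β) : HW (Fintype.card V) m n α β := by
  refine ⟨⊥, fun _ ↦ rfl, fun heven ↦ absurd heven (Nat.not_even_iff_odd.2 hV), ?_⟩
  have htop : (⊤ : SimpleGraph V).map (Fintype.equivFin V) = ⊤ := by
    ext
    simp [← mem_neighborSet, neighborSet_map_equiv]
  simpa only [sdiff_bot, htop] using h.map_equiv (Fintype.equivFin V)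

end Decompositions

section CosetWalks

variable {G : Type*} [AddGroup G]

lemma exists_zmod_addOrderOf_add_one (t : G) :
    ∃ k : G → ZMod (addOrderOf t), ∀ x, k (x + t) = k x + 1 := by
  let rep : G → G := fun x ↦ (x : G ⧸ AddSubgroup.zmultiples t).out
  have hrep (x : G) : ∃ k : ℤ, k • t = -rep x + x :=
    AddSubgroup.mem_zmultiples_iff.1 (QuotientAddGroup.eq.1 (Quotient.out_eq _))
  choose k hk using hrep
  have hrep_add (x : G) : rep (x + t) = rep x :=
    congrArg Quotient.out (QuotientAddGroup.mk_add_of_mem x (AddSubgroup.mem_zmultiples t))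
  refine ⟨fun x ↦ k x, fun x ↦ ?_⟩
  have hstep : k (x + t) • t = (k x + 1) • t := by
    rw [hk, hrep_add, add_zsmul, one_zsmul, hk, add_assoc]
  change (k (x + t) : ZMod (addOrderOf t)) = k x + 1
  exact_mod_cast (ZMod.intCast_eq_intCast_iff _ _ _).2 (zsmul_eq_zsmul_iff_modEq.1 hstep)

-- The closed walk makes three steps `B` and then `m - 3` steps `A`.
lemma exists_closed_walk_zmod {P : Type*} [Group P] {A B : P} (hA : A ^ 2 = 1) (hB : B ^ 3 = 1)
    {m : ℕ} (hm : Odd m) (hm3 : 3 ≤ m) :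
    ∃ w : ZMod m → P, ∀ i, ∃ σ ∈ [A, B], w (i + 1) = σ * w i := by
  let u : ℕ → P := fun i ↦ if i < 3 then B ^ i else A ^ (i - 3)
  have hu_succ (i : ℕ) : ∃ σ ∈ [A, B], u (i + 1) = σ * u i := by
    obtain hi | rfl | hi : i < 2 ∨ i = 2 ∨ 3 ≤ i := by omega
    · exact ⟨B, by simp, by simp [u, pow_succ', show i < 3 by omega, hi]⟩
    · exact ⟨B, by simp, by simp [u, ← pow_succ', hB]⟩
    · exact ⟨A, by simp, by
        simp [u, ← pow_succ', hi.not_gt, show ¬ i + 1 < 3 by omega, Nat.sub_add_comm hi]⟩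
  have hu_last : u m = u 0 := by
    obtain ⟨q, hq⟩ : 2 ∣ m - 3 := by obtain ⟨q, rfl⟩ := hm; omega
    simp [u, hm3.not_gt, hq, pow_mul, hA]
  have : NeZero m := ⟨by omega⟩
  have : Fact (1 < m) := ⟨by omega⟩
  refine ⟨fun i ↦ u i.val, fun i ↦ ?_⟩
  have hval : u (i + 1).val = u (i.val + 1) := by
    rw [ZMod.val_add, ZMod.val_one]
    obtain hlt | heq : i.val + 1 < m ∨ i.val + 1 = m := by have := i.val_lt; omega
    · rw [Nat.mod_eq_of_lt hlt]
    · rw [heq, Nat.mod_self, hu_last]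
  simpa only [hval] using hu_succ i.val

lemma exists_coset_walk {P : Type*} [Group P] {A B : P} (hA : A ^ 2 = 1) (hB : B ^ 3 = 1)
    {t : G} (ht : Odd (addOrderOf t)) (ht0 : t ≠ 0) :
    ∃ c : G → P, ∀ x, ∃ σ ∈ [A, B], c (x + t) = σ * c x := by
  have hne : addOrderOf t ≠ 1 := by simpa using ht0
  obtain ⟨k, hk⟩ := exists_zmod_addOrderOf_add_one t
  obtain ⟨w, hw⟩ := exists_closed_walk_zmod hA hB ht (by obtain ⟨q, hq⟩ := ht; omega)
  exact ⟨fun x ↦ w (k x), fun x ↦ by simpa only [hk] using hw (k x)⟩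

end CosetWalks

section HalfSystems

/-- A half-system of an additive group: a family of nonzero elements meeting every pair `{e, -e}`
with `e ≠ 0`. -/
def IsHalfSystem {ι G : Type*} [AddGroup G] (s : ι → G) : Prop :=
  (∀ i, s i ≠ 0) ∧ ∀ e ≠ 0, ∃ i, e = s i ∨ e = -s i

lemma isHalfSystem_zmod (h : ℕ) :
    IsHalfSystem fun i : Option (Fin h) ↦
      ((i.elim 1 fun j ↦ (j : ℕ) + 2 : ℕ) : ZMod (2 * h + 3)) := by
  constructor
  · intro i
    rw [Ne, ZMod.natCast_eq_zero_iff]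
    exact Nat.not_dvd_of_pos_of_lt (by cases i <;> simp)
      (by cases i <;> dsimp only [Option.elim] <;> omega)
  · intro e he
    have habs : ∃ i : Option (Fin h), e.valMinAbs.natAbs = i.elim 1 fun j ↦ (j : ℕ) + 2 := by
      have hpos : e.valMinAbs.natAbs ≠ 0 := by simpa using he
      have hle := ZMod.natAbs_valMinAbs_le e
      obtain hone | htwo : e.valMinAbs.natAbs = 1 ∨ 2 ≤ e.valMinAbs.natAbs := by omega
      · exact ⟨none, hone⟩
      · exact ⟨some ⟨e.valMinAbs.natAbs - 2, by omega⟩, (Nat.sub_add_cancel htwo).symm⟩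
    obtain ⟨i, hi⟩ := habs
    have hcast := ZMod.natCast_natAbs_valMinAbs e
    rw [hi] at hcast
    refine ⟨i, ?_⟩
    split_ifs at hcast
    · exact .inl hcast.symm
    · exact .inr (neg_eq_iff_eq_neg.1 hcast.symm)

end HalfSystems

section Blocks

/-- The subgroup of order three of the group of labels. Every base class of triangles is used
together with its translates by these shifts. -/
def labelShift : Fin 3 → Fin 15 := ![0, 5, 10]

/-- The labels of the triangles `{(x - d, a), (x, b), (x + d, c)}` whose labels depend on the
colour, in `Fin 3`, given to the centre `x`. -/
def colouredBlock : Fin 3 → Fin 5 → Fin 3 → Fin 15 :=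
  ![![![1, 5, 1], ![2, 3, 9], ![9, 8, 10], ![10, 4, 2], ![14, 6, 14]],
    ![![0, 3, 0], ![7, 4, 7], ![11, 6, 12], ![12, 8, 11], ![13, 5, 13]],
    ![![1, 3, 12], ![2, 4, 0], ![9, 6, 13], ![10, 5, 11], ![14, 8, 7]]]

/-- The labels of the triangles `{(x - d, a), (x, b), (x + d, c)}` of the two base classes whose
labels do not depend on `x`. -/
def plainBlock : Fin 2 → Fin 5 → Fin 3 → Fin 15 :=
  ![![![0, 12, 2], ![3, 7, 13], ![8, 6, 4], ![11, 1, 10], ![14, 5, 9]],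
    ![![0, 13, 14], ![2, 5, 10], ![3, 11, 8], ![4, 6, 9], ![12, 7, 1]]]

/-- Four base classes of triangles `{(x + p • g, a), (x + q • g, b), (x + r • g, c)}`, given as
pairs of a multiple of `g` and a label. They use up the edges inside the fibres that are not in
pentagons, and replace the plain classes for `d = g`. -/
def starterBlock : Fin 4 → Fin 5 → Fin 3 → ℤ × Fin 15 :=
  ![![![(0, 0), (1, 4), (1, 13)], ![(0, 1), (-1, 3), (-2, 12)], ![(0, 2), (0, 11), (0, 14)],
      ![(0, 5), (0, 7), (0, 10)], ![(0, 6), (0, 8), (1, 9)]],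
    ![![(0, 0), (0, 4), (0, 8)], ![(0, 1), (0, 6), (0, 14)], ![(0, 2), (1, 5), (-1, 12)],
      ![(0, 3), (1, 7), (1, 11)], ![(0, 9), (-2, 10), (-2, 13)]],
    ![![(0, 0), (-1, 9), (0, 11)], ![(0, 1), (1, 13), (1, 14)], ![(0, 2), (0, 4), (0, 10)],
      ![(0, 3), (0, 5), (0, 6)], ![(0, 7), (0, 8), (0, 12)]],
    ![![(0, 0), (2, 2), (1, 5)], ![(0, 1), (1, 10), (-1, 11)], ![(0, 3), (-2, 8), (-2, 13)],
      ![(0, 4), (-2, 9), (-2, 14)], ![(0, 6), (0, 7), (-1, 12)]]]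

/-- The labels of the base pentagon, which lies in a single fibre. -/
def pentagonBlock : Fin 5 → Fin 15 := ![0, 6, 13, 7, 14]

/-- The permutations by which the colour may change from a centre `x` to the centre `x + 2d`. -/
def recolourings : List (Equiv.Perm (Fin 3)) := [Equiv.swap 0 1, Equiv.addRight 1]

-- The point `(y, l)` lies on a triangle centred at `y`, `y - d` or `y + d`, and the colours of the
-- last two centres differ by a recolouring.
lemma colouredBlock_exhausts : ∀ l, (∀ k, ∃ i, colouredBlock k i 1 = l) ∨
    ∀ σ ∈ recolourings, ∀ k,
      (∃ i, colouredBlock k i 2 = l) ∨ ∃ i, colouredBlock (σ k) i 0 = l := by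
  decide +kernel

lemma plainBlock_exhausts : ∀ j l, ∃ i r, plainBlock j i r = l := by
  decide +kernel

lemma starterBlock_exhausts : ∀ j l, ∃ i r, (starterBlock j i r).2 = l := by
  decide +kernel

lemma pentagonBlock_exhausts : ∀ l, ∃ z r, pentagonBlock r + labelShift z = l := by
  decide +kernel

/-- Up to a shift, `a` and `b` are the labels at the positions `r` and `r'` of one of the triples
in the table `B`. -/
def BlockPair {m : ℕ} (B : Fin m → Fin 5 → Fin 3 → Fin 15) (r r' : Fin 3) (a b : Fin 15) : Prop :=
  ∃ j z i, B j i r + labelShift z = a ∧ B j i r' + labelShift z = b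

instance {m : ℕ} (B : Fin m → Fin 5 → Fin 3 → Fin 15) (r r' : Fin 3) :
    DecidableRel (BlockPair B r r') :=
  fun _ _ ↦ inferInstanceAs (Decidable (∃ _, _))

/-- Up to a shift, `a` and `b` are labels of a starter triangle, and the point with label `b` is
`e • g` ahead of the point with label `a`. -/
def StarterPair (e : ℤ) (a b : Fin 15) : Prop :=
  ∃ j z i r, (starterBlock j i r).2 + labelShift z = a ∧
    ∃ r', (starterBlock j i r').2 + labelShift z = b ∧
      (starterBlock j i r').1 = (starterBlock j i r).1 + e

instance (e : ℤ) : DecidableRel (StarterPair e) :=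
  fun _ _ ↦ inferInstanceAs (Decidable (∃ _, _))

/-- The triangles with half-step `d` join `(x, a)` to `(x + d, b)`. -/
def ShortPair (a b : Fin 15) : Prop :=
  (BlockPair colouredBlock 0 1 a b ∨ BlockPair colouredBlock 1 2 a b) ∨
    BlockPair plainBlock 0 1 a b ∨ BlockPair plainBlock 1 2 a b

instance : DecidableRel ShortPair := fun _ _ ↦ inferInstanceAs (Decidable (_ ∨ _))

/-- The triangles with half-step `d` join `(x, a)` to `(x + 2d, b)`. -/
def LongPair (a b : Fin 15) : Prop :=
  BlockPair colouredBlock 0 2 a b ∨ BlockPair plainBlock 0 2 a b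

instance : DecidableRel LongPair := fun _ _ ↦ inferInstanceAs (Decidable (_ ∨ _))

lemma shortPair_or_longPair : ∀ a b,
    (ShortPair a b ∧ ShortPair b a) ∨ (LongPair a b ∧ LongPair b a) := by
  decide +kernel

lemma starterPair_one_of_plainBlock : ∀ a b,
    BlockPair plainBlock 0 1 a b ∨ BlockPair plainBlock 1 2 a b → StarterPair 1 a b := by
  decide +kernel

lemma starterPair_two_of_plainBlock : ∀ a b, BlockPair plainBlock 0 2 a b → StarterPair 2 a b := by
  decide +kernel

lemma starterPair_zero_or_pentagon : ∀ a b, a ≠ b → StarterPair 0 a b ∨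
    ∃ z r r', (cycleGraph 5).Adj r r' ∧ pentagonBlock r + labelShift z = a ∧
      pentagonBlock r' + labelShift z = b := by
  decide +kernel

end Blocks


section Construction

variable {G ι : Type*} [AddCommGroup G]

/-- The positions `-d, 0, d` of the points of a triangle with half-step `d` relative to its
centre. -/
def centred (d : G) : Fin 3 → G := ![-d, 0, d]

/-- The starter class obtained from the `j`-th base class by the `z`-th shift of the labels. -/
def starterTriangles (g : G) (j : Fin 4) (z : Fin 3) (p : (G × Fin 5) × Fin 3) : G × Fin 15 :=
  (p.1.1 + (starterBlock j p.1.2 p.2).1 • g, (starterBlock j p.1.2 p.2).2 + labelShift z)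

/-- The plain class with half-step `d` obtained from the `j`-th base class by the `z`-th shift of
the labels. -/
def plainTriangles (d : G) (j : Fin 2) (z : Fin 3) (p : (G × Fin 5) × Fin 3) : G × Fin 15 :=
  (p.1.1 + centred d p.2, plainBlock j p.1.2 p.2 + labelShift z)

/-- The coloured class with half-step `d` and `z`-th shift of the labels. The permutation `c x`
turns the index `κ` of the class into the colour of the centre `x`, so for every centre the
classes run through all colours. -/
def colouredTriangles (d : G) (c : G → Equiv.Perm (Fin 3)) (κ z : Fin 3)
    (p : (G × Fin 5) × Fin 3) : G × Fin 15 :=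
  (p.1.1 + centred d p.2, colouredBlock (c p.1.1 κ) p.1.2 p.2 + labelShift z)

/-- The class of pentagons, all of them inside fibres: in each fibre, the shifts of the base
pentagon. -/
def pentagons {X : Type*} (p : (X × Fin 3) × Fin 5) : X × Fin 15 :=
  (p.1.1, pentagonBlock p.2 + labelShift p.1.2)

/-- The colouring `c` changes by a recolouring whenever the centre moves by `2d`. -/
def IsColouring (d : G) (c : G → Equiv.Perm (Fin 3)) : Prop :=
  ∀ x, ∃ σ ∈ recolourings, c (x + (d + d)) = σ * c x

lemma starterTriangles_surjective (g : G) (j : Fin 4) (z : Fin 3) :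
    Function.Surjective (starterTriangles g j z) := by
  rintro ⟨y, l⟩
  obtain ⟨i, r, h⟩ := starterBlock_exhausts j (l - labelShift z)
  exact ⟨((y - (starterBlock j i r).1 • g, i), r), by simp [starterTriangles, h]⟩

lemma plainTriangles_surjective (d : G) (j : Fin 2) (z : Fin 3) :
    Function.Surjective (plainTriangles d j z) := by
  rintro ⟨y, l⟩
  obtain ⟨i, r, h⟩ := plainBlock_exhausts j (l - labelShift z)
  exact ⟨((y - centred d r, i), r), by simp [plainTriangles, h]⟩

lemma colouredTriangles_surjective {d : G} {c : G → Equiv.Perm (Fin 3)} (hc : IsColouring d c)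
    (κ z : Fin 3) : Function.Surjective (colouredTriangles d c κ z) := by
  rintro ⟨y, l⟩
  suffices ∃ i r, colouredBlock (c (y - centred d r) κ) i r = l - labelShift z by
    obtain ⟨i, r, h⟩ := this
    exact ⟨((y - centred d r, i), r), by simp [colouredTriangles, h]⟩
  obtain ⟨σ, hσ, hstep⟩ := hc (y - d)
  have hcentre : y - -d = y - d + (d + d) := by abel
  obtain hmid | hends := colouredBlock_exhausts (l - labelShift z)
  · obtain ⟨i, hi⟩ := hmid (c (y - centred d 1) κ)
    exact ⟨i, 1, hi⟩
  · obtain ⟨i, hi⟩ | ⟨i, hi⟩ := hends σ hσ (c (y - d) κ)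
    · exact ⟨i, 2, hi⟩
    · refine ⟨i, 0, ?_⟩
      change colouredBlock (c (y - -d) κ) i 0 = _
      rwa [hcentre, hstep]

lemma pentagons_surjective {X : Type*} : Function.Surjective (pentagons (X := X)) := by
  rintro ⟨y, l⟩
  obtain ⟨z, r, h⟩ := pentagonBlock_exhausts l
  exact ⟨((y, z), r), congrArg (y, ·) h⟩

/-- The index type of the triangle classes: starter, plain and coloured ones. The element `none`
of `Option ι` stands for the half-step that the starter classes take care of. -/
abbrev TriangleIndex (ι : Type*) : Type _ :=
  (Fin 4 × Fin 3) ⊕ (ι × Fin 2 × Fin 3) ⊕ (Option ι × Fin 3 × Fin 3)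

/-- The triangle classes for the half-steps `s i` with colourings `c i`. -/
def triangles (s : Option ι → G) (c : Option ι → G → Equiv.Perm (Fin 3)) :
    TriangleIndex ι → (G × Fin 5) × Fin 3 → G × Fin 15
  | .inl (j, z) => starterTriangles (s none) j z
  | .inr (.inl (i, j, z)) => plainTriangles (s (some i)) j z
  | .inr (.inr (i, κ, z)) => colouredTriangles (s i) (c i) κ z

lemma triangles_surjective {s : Option ι → G} {c : Option ι → G → Equiv.Perm (Fin 3)}
    (hc : ∀ i, IsColouring (s i) (c i)) (I : TriangleIndex ι) :
    Function.Surjective (triangles s c I) := by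
  match I with
  | .inl (j, z) => exact starterTriangles_surjective _ j z
  | .inr (.inl (_, j, z)) => exact plainTriangles_surjective _ j z
  | .inr (.inr (i, κ, z)) => exact colouredTriangles_surjective (hc i) κ z

/-- `x` and `y` lie on a common triangle of one of the classes `triangles s c`. -/
def OnCommonTriangle (s : Option ι → G) (c : Option ι → G → Equiv.Perm (Fin 3))
    (x y : G × Fin 15) : Prop :=
  ∃ I t r r', triangles s c I (t, r) = x ∧ triangles s c I (t, r') = y

variable {s : Option ι → G} {c : Option ι → G → Equiv.Perm (Fin 3)} {a b : Fin 15} {r r' : Fin 3}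

lemma OnCommonTriangle.symm {x y : G × Fin 15} (h : OnCommonTriangle s c x y) :
    OnCommonTriangle s c y x := by
  obtain ⟨I, t, r, r', hx, hy⟩ := h
  exact ⟨I, t, r', r, hy, hx⟩

lemma OnCommonTriangle.exists_adj {x y : G × Fin 15} (h : OnCommonTriangle s c x y) (hne : x ≠ y) :
    ∃ I, (cyclesOf (triangles s c I)).Adj x y := by
  obtain ⟨I, t, r, r', rfl, rfl⟩ := h
  refine ⟨I, cyclesOf_adj ?_ hne⟩
  rw [cycleGraph_three_eq_top, top_adj]
  rintro rfl
  exact hne rfl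

variable (s c) in
lemma onCommonTriangle_of_starterPair {e : ℤ} (h : StarterPair e a b) (x : G) :
    OnCommonTriangle s c (x, a) (x + e • s none, b) := by
  obtain ⟨j, z, i, r, ha, r', hb, he⟩ := h
  exact ⟨.inl (j, z), (x - (starterBlock j i r).1 • s none, i), r, r',
    by simp [triangles, starterTriangles, ha],
    by simp [triangles, starterTriangles, hb, he, add_zsmul, ← add_assoc]⟩

variable (s c) in
lemma onCommonTriangle_of_plainPair (h : BlockPair plainBlock r r' a b) (i : ι) (x : G) :
    OnCommonTriangle s c (x + centred (s (some i)) r, a) (x + centred (s (some i)) r', b) := by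
  obtain ⟨j, z, k, ha, hb⟩ := h
  exact ⟨.inr (.inl (i, j, z)), (x, k), r, r', congrArg (_, ·) ha, congrArg (_, ·) hb⟩

variable (s c) in
lemma onCommonTriangle_of_colouredPair (h : BlockPair colouredBlock r r' a b) (i : Option ι)
    (x : G) :
    OnCommonTriangle s c (x + centred (s i) r, a) (x + centred (s i) r', b) := by
  obtain ⟨κ, z, k, ha, hb⟩ := h
  exact ⟨.inr (.inr (i, (c i x).symm κ, z)), (x, k), r, r',
    by simp [triangles, colouredTriangles, ha], by simp [triangles, colouredTriangles, hb]⟩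

lemma onCommonTriangle_add_of_shortPair (h : ShortPair a b) (i : Option ι) (x : G) :
    OnCommonTriangle s c (x, a) (x + s i, b) := by
  obtain (h | h) | h := h
  · simpa [centred] using onCommonTriangle_of_colouredPair s c h i (x + s i)
  · simpa [centred] using onCommonTriangle_of_colouredPair s c h i x
  obtain _ | i := i
  · simpa using
      onCommonTriangle_of_starterPair s c (starterPair_one_of_plainBlock a b h) x
  obtain h | h := h
  · simpa [centred] using onCommonTriangle_of_plainPair s c h i (x + s (some i))
  · simpa [centred] using onCommonTriangle_of_plainPair s c h i x

lemma onCommonTriangle_add_add_of_longPair (h : LongPair a b) (i : Option ι) (x : G) :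
    OnCommonTriangle s c (x, a) (x + (s i + s i), b) := by
  obtain h | h := h
  · simpa [centred, add_assoc] using onCommonTriangle_of_colouredPair s c h i (x + s i)
  obtain _ | i := i
  · simpa [two_zsmul] using
      onCommonTriangle_of_starterPair s c (starterPair_two_of_plainBlock a b h) x
  · simpa [centred, add_assoc] using
      onCommonTriangle_of_plainPair s c h i (x + s (some i))

lemma onCommonTriangle_of_fst_ne (hs : IsHalfSystem s) (hG : Odd (Nat.card G)) {x y : G}
    (hxy : x ≠ y) (a b : Fin 15) : OnCommonTriangle s c (x, a) (y, b) := by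
  obtain ⟨hab, hba⟩ | ⟨hab, hba⟩ := shortPair_or_longPair a b
  · obtain ⟨i, hi | hi⟩ := hs.2 (y - x) (sub_ne_zero.2 hxy.symm)
    · obtain rfl : x + s i = y := by rw [← hi, add_sub_cancel]
      exact onCommonTriangle_add_of_shortPair hab i x
    · obtain rfl : y + s i = x := by rw [← neg_eq_iff_eq_neg.2 hi, neg_sub, add_sub_cancel]
      exact (onCommonTriangle_add_of_shortPair hba i y).symm
  · obtain ⟨d, hd : 2 • d = y - x⟩ :=
      (Nat.Coprime.nsmul_right_bijective hG.coprime_two_right).surjective (y - x)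
    rw [two_nsmul] at hd
    have hd0 : d ≠ 0 := by rintro rfl; exact hxy (by simpa [eq_comm, sub_eq_zero] using hd)
    obtain ⟨i, rfl | rfl⟩ := hs.2 d hd0
    · obtain rfl : x + (s i + s i) = y := by rw [hd, add_sub_cancel]
      exact onCommonTriangle_add_add_of_longPair hab i x
    · obtain rfl : y + (s i + s i) = x := by
        rw [← neg_add, neg_eq_iff_eq_neg] at hd
        rw [hd, neg_sub, add_sub_cancel]
      exact (onCommonTriangle_add_add_of_longPair hba i y).symm

lemma onCommonTriangle_or_pentagons_adj (x : G) (hab : a ≠ b) :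
    OnCommonTriangle s c (x, a) (x, b) ∨ (cyclesOf pentagons).Adj (x, a) (x, b) := by
  obtain h | ⟨z, r, r', hr, rfl, rfl⟩ := starterPair_zero_or_pentagon a b hab
  · exact .inl (by simpa using onCommonTriangle_of_starterPair s c h x)
  · exact .inr (cyclesOf_adj (φ := pentagons) (t := (x, z)) hr (by simpa [pentagons] using hab))

lemma exists_isColouring {d : G} (hG : Odd (Nat.card G)) (hd : d ≠ 0) : ∃ c, IsColouring d c := by
  have hdd : d + d ≠ 0 := by
    rw [← two_nsmul]
    exact fun h ↦ hd <| (Nat.Coprime.nsmul_right_bijective hG.coprime_two_right).injective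
      (h.trans (smul_zero 2).symm)
  exact exists_coset_walk (by decide) (by decide) (hG.of_dvd_nat (addOrderOf_dvd_natCard _)) hdd

theorem isHWGraph_top_prod_fin_fifteen [Fintype G] [Fintype ι] (hs : IsHalfSystem s)
    (hcard : Fintype.card G = 2 * Fintype.card ι + 3) :
    IsHWGraph (⊤ : SimpleGraph (G × Fin 15)) 3 5 (15 * Fintype.card ι + 21) 1 := by
  have hG : Odd (Nat.card G) := ⟨Fintype.card ι + 1, by rw [Nat.card_eq_fintype_card]; omega⟩
  choose c hc using fun i ↦ exists_isColouring hG (hs.1 i)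
  have hι : Fintype.card (TriangleIndex ι) = 15 * Fintype.card ι + 21 := by
    simp only [Fintype.card_sum, Fintype.card_prod, Fintype.card_fin, Fintype.card_option]
    ring
  rw [← hι, ← Fintype.card_unit]
  refine isHWGraph_top_of_cover (A := fun I ↦ cyclesOf (triangles s c I))
    (B := fun _ ↦ cyclesOf pentagons) (fun I ↦ ?_) (fun _ ↦ ?_) ?_ ?_
  · exact isCycleFactor_cyclesOf_of_surjective le_rfl (triangles_surjective hc I)
      (by simp [mul_assoc])
  · exact isCycleFactor_cyclesOf_of_surjective (by norm_num) pentagons_surjective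
      (by simp [mul_assoc])
  · rw [Fintype.card_prod, Fintype.card_fin, Fintype.card_unit, hι, hcard]
    ring
  · rintro ⟨x, a⟩ ⟨y, b⟩ hne
    obtain rfl | hxy := eq_or_ne x y
    · refine (onCommonTriangle_or_pentagons_adj x ?_).imp (·.exists_adj hne) fun h ↦ ⟨(), h⟩
      exact fun hab ↦ hne (congrArg _ hab)
    · exact .inl ((onCommonTriangle_of_fst_ne hs hG hxy a b).exists_adj hne)

end Construction

theorem stmt_12 (v : ℕ) (hv : v % 30 = 15) (hv15 : 15 < v) :
    HW v 3 5 ((v - 3) / 2) 1 := by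
  obtain ⟨h, rfl⟩ : ∃ h, v = 30 * h + 45 := ⟨(v - 45) / 30, by omega⟩
  have hHW := isHWGraph_top_prod_fin_fifteen (isHalfSystem_zmod h) (by simp [ZMod.card])
  have hcard : Fintype.card (ZMod (2 * h + 3) × Fin 15) = 30 * h + 45 := by
    rw [Fintype.card_prod, ZMod.card, Fintype.card_fin]
    ring
  have hodd : Odd (Fintype.card (ZMod (2 * h + 3) × Fin 15)) := ⟨15 * h + 22, by omega⟩
  have hα : (30 * h + 45 - 3) / 2 = 15 * h + 21 := by omega
  simpa only [hcard, hα, Fintype.card_fin] using hHW.hw_card hodd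
end
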